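/- Let O and O' be turn orders for two multi-walker stack walks on G with the same initial locations x ∈ V^n and the same initial stack ξ, and suppose O' is a regular turn order. Then for every vertex x ∈ V, the total number of visits to x (i.e. transitions into x by some walker) over the entire walk with turn order O is at most the total number of visits to x over the entire walk with turn order O' (as elements of ℕ ∪ {∞}). -/

import Mathlib

/-!
The proof is the abelian property of stack walks. Let `odo t y` be the number of departures from
`y` up to time `t`. The walk consumes each stack in order, so `odo t` determines the set of used
cards, and the visits to `v` up to time `t` correspond exactly to the used cards labelled `v`
(`encard_visits_eq`). In particular the number of visits is monotone in the odometer.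

It thus suffices that every odometer value of the first walk is eventually dominated by the
odometer of the second (`exists_odo_le`), by induction on time. Suppose `odo t ≤ odo' t'` and the
first walk now moves a walker from `y`. If `odo' t' y > odo t y`, nothing is needed. Otherwise the
departures from `y` agree while the arrivals at `y` are at least as many in the second walk, so by
conservation of walkers (`occ_add_odo`) the second walk also has a walker at `y` at time `t'`; by
regularity it eventually moves, and `odo' y` increases.
-/

open Filter

namespace StackWalk

variable {V : Type*}

/-- The state of a multi-walker stack walk: the positions of the `n` walkers together
with the current stack. -/
abbrev State (V : Type*) (n : ℕ) := (Fin n → V) × (V → ℕ → V)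

/-- `ξ` is a stack of the graph `G`: `ξ x m` is always a neighbor of `x`. -/
def IsStack (G : SimpleGraph V) (ξ : V → ℕ → V) : Prop :=
  ∀ x m, G.Adj x (ξ x m)

/-- A stack is regular if, for every vertex `x`, every neighbor of `x` appears
infinitely many times in the stack of `x`. -/
def RegularStack (G : SimpleGraph V) (ξ : V → ℕ → V) : Prop :=
  ∀ x y, G.Adj x y → {m : ℕ | ξ x m = y}.Infinite

open Classical in
/-- The popping operation at `x`: remove the top card of the stack of `x`. -/
noncomputable def pop (x : V) (ξ : V → ℕ → V) : V → ℕ → V :=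
  fun y m => if y = x then ξ y (m + 1) else ξ y m

/-- One step of the stack walk performed by walker `i`: the stack at the current
location of walker `i` is popped, and walker `i` moves to the new top card. -/
noncomputable def step (n : ℕ) (s : State V n) (i : Fin n) : State V n :=
  (Function.update s.1 i (pop (s.1 i) s.2 (s.1 i) 0), pop (s.1 i) s.2)

/-- The multi-walker stack walk with initial locations `x0`, initial stack `ξ0` and
turn order `o` (where `o t = some i` means walker `i` moves at the `(t+1)`-st step, and
`o t = none` means nobody moves). -/
noncomputable def walk (n : ℕ) (x0 : Fin n → V) (ξ0 : V → ℕ → V)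
    (o : ℕ → Option (Fin n)) : ℕ → State V n
  | 0 => (x0, ξ0)
  | t + 1 =>
    match o t with
    | none => walk n x0 ξ0 o t
    | some i => step n (walk n x0 ξ0 o t) i

/-- A turn order is regular if every walker performs infinitely many steps. -/
def RegularOrder (n : ℕ) (o : ℕ → Option (Fin n)) : Prop :=
  ∀ i : Fin n, {t : ℕ | o t = some i}.Infinite

/-- A (trajectory of a) stack walk is recurrent if every vertex is visited infinitely
many times. -/
def Recurrent (n : ℕ) (w : ℕ → State V n) : Prop :=
  ∀ v : V, {t : ℕ | ∃ i, (w t).1 i = v}.Infinite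

/-- A (trajectory of a) stack walk is transient if every vertex is visited at most
finitely many times. -/
def Transient (n : ℕ) (w : ℕ → State V n) : Prop :=
  ∀ v : V, {t : ℕ | ∃ i, (w t).1 i = v}.Finite

end StackWalk

namespace StackWalk

/-- The total number of transitions into `v` (i.e. visits to `v`) over the entire walk,
valued in `ℕ∞`. -/
noncomputable def visitCount (n : ℕ) (w : ℕ → State V n) (v : V) : ℕ∞ :=
  {s : ℕ | 1 ≤ s ∧ ∃ i, (w (s - 1)).1 i ≠ v ∧ (w s).1 i = v}.encard

end StackWalk

namespace StackWalk

/-! ### Odometer, used cards and occupation numbers -/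

open Classical in
/-- The odometer: `odo n x0 ξ0 o t y` is the number of departures from `y` in the first `t`
steps. -/
noncomputable def odo (n : ℕ) (x0 : Fin n → V) (ξ0 : V → ℕ → V)
    (o : ℕ → Option (Fin n)) : ℕ → V → ℕ
  | 0 => fun _ => 0
  | t + 1 =>
    match o t with
    | none => odo n x0 ξ0 o t
    | some i =>
      Function.update (odo n x0 ξ0 o t) ((walk n x0 ξ0 o t).1 i)
        (odo n x0 ξ0 o t ((walk n x0 ξ0 o t).1 i) + 1)

/-- The cards labelled `v` that have been followed when the odometer is `d`. A step pops before it
reads the top card, so the `k`-th departure from `y` follows `ξ y k`, and indices start at `1`. -/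
def used (ξ : V → ℕ → V) (d : V → ℕ) (v : V) : Set (V × ℕ) :=
  {p | 1 ≤ p.2 ∧ p.2 ≤ d p.1 ∧ ξ p.1 p.2 = v}

open Classical in
/-- The number of walkers located at `v`. -/
noncomputable def occ {n : ℕ} (x : Fin n → V) (v : V) : ℕ := ∑ i, if x i = v then 1 else 0

lemma used_mono (ξ : V → ℕ → V) {d d' : V → ℕ} (h : ∀ y, d y ≤ d' y) (v : V) :
    used ξ d v ⊆ used ξ d' v :=
  fun _ hp => ⟨hp.1, hp.2.1.trans (h _), hp.2.2⟩

open Classical in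
lemma encard_used_update (ξ : V → ℕ → V) (d : V → ℕ) (y v : V) :
    (used ξ (Function.update d y (d y + 1)) v).encard
      = (used ξ d v).encard + ((if ξ y (d y + 1) = v then 1 else 0 : ℕ) : ℕ∞) := by
  split_ifs with h
  · have : used ξ (Function.update d y (d y + 1)) v = insert (y, d y + 1) (used ξ d v) := by
      ext ⟨z, k⟩
      simp only [used, Set.mem_ofPred_eq, Set.mem_insert_iff, Prod.mk.injEq, Function.update_apply]
      by_cases hz : z = y
      · subst hz; grind
      · simp [hz]
    rw [this, Set.encard_insert_of_notMem (by simp [used])]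
    simp
  · have : used ξ (Function.update d y (d y + 1)) v = used ξ d v := by
      ext ⟨z, k⟩
      simp only [used, Set.mem_ofPred_eq, Function.update_apply]
      by_cases hz : z = y
      · subst hz; grind
      · simp [hz]
    rw [this]; simp

open Classical in
lemma occ_update {n : ℕ} (x : Fin n → V) (i : Fin n) (w v : V) :
    occ (Function.update x i w) v + (if x i = v then 1 else 0)
      = occ x v + (if w = v then 1 else 0) := by
  unfold occ
  rw [← Finset.add_sum_erase _ _ (Finset.mem_univ i),
    ← Finset.add_sum_erase (Finset.univ) (fun j => if x j = v then 1 else 0) (Finset.mem_univ i)]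
  have : ∑ j ∈ Finset.univ.erase i, (if Function.update x i w j = v then 1 else 0)
      = ∑ j ∈ Finset.univ.erase i, (if x j = v then 1 else 0) := by
    refine Finset.sum_congr rfl fun j hj => ?_
    rw [Function.update_of_ne (Finset.ne_of_mem_erase hj)]
  rw [this, Function.update_self]
  ring

lemma occ_pos_iff {n : ℕ} (x : Fin n → V) (v : V) : 0 < occ x v ↔ ∃ i, x i = v := by
  classical
  simp [occ, Finset.sum_boole, Finset.card_pos, Finset.filter_nonempty_iff]

/-! ### The walk in terms of its odometer -/

section Walk

variable (n : ℕ) (x0 : Fin n → V) (ξ0 : V → ℕ → V) (o : ℕ → Option (Fin n))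

lemma walk_succ_none {t : ℕ} (h : o t = none) :
    walk n x0 ξ0 o (t + 1) = walk n x0 ξ0 o t := by
  simp [walk, h]

lemma odo_succ_none {t : ℕ} (h : o t = none) :
    odo n x0 ξ0 o (t + 1) = odo n x0 ξ0 o t := by
  simp [odo, h]

open Classical in
lemma odo_succ_some {t : ℕ} {i : Fin n} (h : o t = some i) :
    odo n x0 ξ0 o (t + 1) = Function.update (odo n x0 ξ0 o t) ((walk n x0 ξ0 o t).1 i)
        (odo n x0 ξ0 o t ((walk n x0 ξ0 o t).1 i) + 1) := by
  simp [odo, h]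

lemma stack_eq (t : ℕ) (y : V) (m : ℕ) :
    (walk n x0 ξ0 o t).2 y m = ξ0 y (m + odo n x0 ξ0 o t y) := by
  induction t generalizing m with
  | zero => simp [walk, odo]
  | succ t ih =>
    rcases h : o t with _ | i
    · rw [walk_succ_none n x0 ξ0 o h, odo_succ_none n x0 ξ0 o h, ih]
    · rw [odo_succ_some n x0 ξ0 o h]
      simp only [walk, h, step, pop, Function.update_apply, ih]
      split_ifs with hy
      · subst hy; congr 1; ring
      · rfl

lemma walk_succ_some {t : ℕ} {i : Fin n} (h : o t = some i) :
    (walk n x0 ξ0 o (t + 1)).1 = Function.update (walk n x0 ξ0 o t).1 i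
      (ξ0 ((walk n x0 ξ0 o t).1 i) (odo n x0 ξ0 o t ((walk n x0 ξ0 o t).1 i) + 1)) := by
  simp only [walk, h, step, pop, if_true, stack_eq]
  congr 2; ring

/-- Conservation of walkers: present walkers plus departures equal initial walkers plus
arrivals. -/
lemma occ_add_odo (t : ℕ) (v : V) :
    ((occ (walk n x0 ξ0 o t).1 v : ℕ) : ℕ∞) + (odo n x0 ξ0 o t v : ℕ)
      = (occ x0 v : ℕ) + (used ξ0 (odo n x0 ξ0 o t) v).encard := by
  classical
  induction t with
  | zero =>
    have : used ξ0 (odo n x0 ξ0 o 0) v = ∅ := by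
      ext p; simp [used, odo]; omega
    rw [this]; simp [walk, odo]
  | succ t ih =>
    rcases h : o t with _ | i
    · rw [walk_succ_none n x0 ξ0 o h, odo_succ_none n x0 ξ0 o h, ih]
    · rw [odo_succ_some n x0 ξ0 o h, walk_succ_some n x0 ξ0 o h, encard_used_update, ← add_assoc,
        ← ih]
      have key := occ_update (walk n x0 ξ0 o t).1 i
        (ξ0 ((walk n x0 ξ0 o t).1 i) (odo n x0 ξ0 o t ((walk n x0 ξ0 o t).1 i) + 1)) v
      norm_cast
      rw [add_right_comm, ← key, Function.update_apply]
      by_cases hv : v = (walk n x0 ξ0 o t).1 i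
      · subst hv; simp; ring
      · simp [hv, Ne.symm hv]

/-- Each used card labelled `v` accounts for exactly one visit to `v`; since the graph has no
loops, every step actually changes the position. -/
lemma encard_visits_eq (hξ : ∀ x m, ξ0 x m ≠ x) (t : ℕ) (v : V) :
    {s : ℕ | s ≤ t ∧ 1 ≤ s ∧
        ∃ i, (walk n x0 ξ0 o (s - 1)).1 i ≠ v ∧ (walk n x0 ξ0 o s).1 i = v}.encard
      = (used ξ0 (odo n x0 ξ0 o t) v).encard := by
  classical
  induction t with
  | zero =>
    have h1 : used ξ0 (odo n x0 ξ0 o 0) v = ∅ := by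
      ext p; simp [used, odo]; omega
    rw [h1, Set.encard_empty, Set.encard_eq_zero]
    ext s
    simp only [Set.mem_ofPred_eq, Set.mem_empty_iff_false, iff_false]
    omega
  | succ t ih =>
    have split : {s : ℕ | s ≤ t + 1 ∧ 1 ≤ s ∧
        ∃ i, (walk n x0 ξ0 o (s - 1)).1 i ≠ v ∧ (walk n x0 ξ0 o s).1 i = v}
      = {s : ℕ | s ≤ t ∧ 1 ≤ s ∧
        ∃ i, (walk n x0 ξ0 o (s - 1)).1 i ≠ v ∧ (walk n x0 ξ0 o s).1 i = v} ∪
        {s : ℕ | s = t + 1 ∧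
          ∃ i, (walk n x0 ξ0 o t).1 i ≠ v ∧ (walk n x0 ξ0 o (t + 1)).1 i = v} := by
      ext s
      simp only [Set.mem_ofPred_eq, Set.mem_union]
      rcases eq_or_ne s (t + 1) with rfl | hs
      · simp
      · constructor
        · rintro ⟨h1, h2⟩; exact Or.inl ⟨by omega, h2⟩
        · rintro (⟨h1, h2⟩ | ⟨h1, _⟩)
          · exact ⟨by omega, h2⟩
          · exact absurd h1 hs
    rw [split, Set.encard_union_eq (by
      rw [Set.disjoint_left]; rintro s ⟨h1, _⟩ ⟨h2, _⟩; omega), ih]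
    rcases h : o t with _ | i
    · rw [walk_succ_none n x0 ξ0 o h, odo_succ_none n x0 ξ0 o h]
      simp
    · rw [odo_succ_some n x0 ξ0 o h, encard_used_update]
      congr 1
      rw [walk_succ_some n x0 ξ0 o h]
      set X := (walk n x0 ξ0 o t).1
      set w := ξ0 (X i) (odo n x0 ξ0 o t (X i) + 1) with hw
      have hne : w ≠ X i := hξ _ _
      have hiff : (∃ j, X j ≠ v ∧ Function.update X i w j = v) ↔ w = v := by
        constructor
        · rintro ⟨j, hj, hj'⟩
          by_cases hji : j = i
          · subst hji; simpa using hj'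
          · rw [Function.update_of_ne hji] at hj'; exact absurd hj' hj
        · rintro rfl
          exact ⟨i, hne.symm, by simp⟩
      rw [hiff]
      split_ifs with hv
      · simp [hv]
      · simp [hv]

lemma odo_le_succ (t : ℕ) (y : V) : odo n x0 ξ0 o t y ≤ odo n x0 ξ0 o (t + 1) y := by
  classical
  rcases h : o t with _ | i
  · rw [odo_succ_none n x0 ξ0 o h]
  · rw [odo_succ_some n x0 ξ0 o h, Function.update_apply]
    split_ifs with hy
    · subst hy; omega
    · rfl

lemma odo_mono {s t : ℕ} (h : s ≤ t) (y : V) : odo n x0 ξ0 o s y ≤ odo n x0 ξ0 o t y :=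
  monotone_nat_of_le_succ (f := fun t => odo n x0 ξ0 o t y) (fun t => odo_le_succ n x0 ξ0 o t y) h

lemma walk_eq_of_not_turn {s : ℕ} (i : Fin n) (t : ℕ) (hst : s ≤ t)
    (h : ∀ r, s ≤ r → r < t → o r ≠ some i) :
    (walk n x0 ξ0 o t).1 i = (walk n x0 ξ0 o s).1 i := by
  induction t, hst using Nat.le_induction with
  | base => rfl
  | succ t hst ih =>
    rw [← ih fun r h1 h2 => h r h1 (by omega)]
    rcases ho : o t with _ | j
    · rw [walk_succ_none n x0 ξ0 o ho]
    · rw [walk_succ_some n x0 ξ0 o ho, Function.update_of_ne]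
      rintro rfl
      exact h t hst (by omega) ho

/-- Under a regular turn order, a walker located at `y` eventually departs from `y`. -/
lemma exists_odo_lt (ho : RegularOrder n o) (s : ℕ) (i : Fin n) :
    ∃ t, s ≤ t ∧ odo n x0 ξ0 o s ((walk n x0 ξ0 o s).1 i)
      < odo n x0 ξ0 o t ((walk n x0 ξ0 o s).1 i) := by
  classical
  have hex : ∃ t, s ≤ t ∧ o t = some i := by
    obtain ⟨t, ht, hst⟩ := (ho i).exists_gt s
    exact ⟨t, hst.le, ht⟩
  obtain ⟨hst, ht⟩ := Nat.find_spec hex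
  have hw := walk_eq_of_not_turn n x0 ξ0 o i (Nat.find hex) hst
    fun r h1 h2 h3 => Nat.find_min hex h2 ⟨h1, h3⟩
  refine ⟨Nat.find hex + 1, by omega, ?_⟩
  rw [odo_succ_some n x0 ξ0 o ht, hw, Function.update_self]
  exact Nat.lt_succ_of_le (odo_mono n x0 ξ0 o hst _)

end Walk

/-! ### Comparison of two turn orders -/

/-- Every odometer value of a walk is eventually dominated by the odometer of any walk with the
same initial data and a regular turn order. -/
lemma exists_odo_le (n : ℕ) (x0 : Fin n → V) (ξ0 : V → ℕ → V) (o o' : ℕ → Option (Fin n))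
    (ho' : RegularOrder n o') (t : ℕ) :
    ∃ t', ∀ y, odo n x0 ξ0 o t y ≤ odo n x0 ξ0 o' t' y := by
  classical
  induction t with
  | zero => exact ⟨0, fun y => le_rfl⟩
  | succ t ih =>
    obtain ⟨t', ht'⟩ := ih
    rcases h : o t with _ | i
    · exact ⟨t', by rwa [odo_succ_none n x0 ξ0 o h]⟩
    rw [odo_succ_some n x0 ξ0 o h]
    set y := (walk n x0 ξ0 o t).1 i with hy
    suffices hs : ∃ s, t' ≤ s ∧ odo n x0 ξ0 o t y < odo n x0 ξ0 o' s y by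
      obtain ⟨s, hs, hlt⟩ := hs
      refine ⟨s, fun z => ?_⟩
      rw [Function.update_apply]
      split_ifs with hz
      · subst hz; exact hlt
      · exact (ht' z).trans (odo_mono n x0 ξ0 o' hs z)
    rcases (ht' y).lt_or_eq with hlt | heq
    · exact ⟨t', le_rfl, hlt⟩
    have hpos : 0 < occ (walk n x0 ξ0 o t).1 y := (occ_pos_iff _ _).2 ⟨i, rfl⟩
    have hle : occ (walk n x0 ξ0 o t).1 y ≤ occ (walk n x0 ξ0 o' t').1 y := by
      have h1 := occ_add_odo n x0 ξ0 o t y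
      have h2 := occ_add_odo n x0 ξ0 o' t' y
      have h3 := add_le_add_right (Set.encard_le_encard (used_mono ξ0 ht' y)) (occ x0 y : ℕ∞)
      rw [← h1, ← h2, heq] at h3
      norm_cast at h3
      omega
    obtain ⟨j, hj⟩ := (occ_pos_iff _ _).1 (hpos.trans_le hle)
    obtain ⟨s, hs, hlt⟩ := exists_odo_lt n x0 ξ0 o' ho' t' j
    rw [hj] at hlt
    exact ⟨s, hs, heq ▸ hlt⟩

end StackWalk

/-- **Lemma (monotonicity of visit counts in the turn order).**
Let `O` and `O'` be turn orders for two stack walks with the same initial locations and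
the same initial stack, and suppose `O'` is regular.  Then for every vertex `x`, the
total number of visits to `x` by the walk with turn order `O` is at most that of the
walk with turn order `O'`. -/
theorem stack_walk_visit_count_le
    {V : Type*} (G : SimpleGraph V) (hG : G.Connected) (hGlf : G.LocallyFinite)
    (n : ℕ) (hn : 0 < n) (x0 : Fin n → V) (ξ0 : V → ℕ → V)
    (hξ0 : StackWalk.IsStack G ξ0)
    (o o' : ℕ → Option (Fin n)) (ho' : StackWalk.RegularOrder n o') :
    ∀ x : V,
      StackWalk.visitCount n (StackWalk.walk n x0 ξ0 o) x ≤
        StackWalk.visitCount n (StackWalk.walk n x0 ξ0 o') x := by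
  classical
  intro v
  have hξ : ∀ x m, ξ0 x m ≠ x := fun x m => (hξ0 x m).symm.ne
  -- Any finite set of visits of the first walk happens before some time `t`, so it suffices to
  -- compare finitely many visits.
  by_contra! hlt
  obtain ⟨F, hFS, hF⟩ := Set.exists_subset_encard_eq (Order.add_one_le_of_lt hlt)
  have hfin : F.Finite := by
    rw [← Set.encard_lt_top_iff, hF]
    exact WithTop.add_lt_top.2 ⟨lt_top_of_lt hlt, ENat.one_lt_top⟩
  obtain ⟨t, ht⟩ := hfin.bddAbove
  obtain ⟨t', ht'⟩ := StackWalk.exists_odo_le n x0 ξ0 o o' ho' t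
  have h1 : F.encard ≤ StackWalk.visitCount n (StackWalk.walk n x0 ξ0 o') v := by
    calc F.encard ≤ {s : ℕ | s ≤ t ∧ 1 ≤ s ∧ ∃ i, (StackWalk.walk n x0 ξ0 o (s - 1)).1 i ≠ v ∧
          (StackWalk.walk n x0 ξ0 o s).1 i = v}.encard :=
        Set.encard_le_encard fun s hs => ⟨ht hs, hFS hs⟩
      _ = _ := StackWalk.encard_visits_eq n x0 ξ0 o hξ t v
      _ ≤ _ := Set.encard_le_encard (StackWalk.used_mono ξ0 ht' v)
      _ = _ := (StackWalk.encard_visits_eq n x0 ξ0 o' hξ t' v).symm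
      _ ≤ _ := Set.encard_le_encard fun s hs => hs.2
  rw [hF] at h1
  exact absurd ((ENat.add_one_le_iff (lt_top_of_lt hlt).ne).1 h1) (lt_irrefl _)
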